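/- Under the stated parameter setting, for every k ∈ [K], every c > 0, and every interval [r, s] ⊆ [1, T] with length τ = s − r + 1 satisfying τ ≤ c·n^(k), the regret of B^K with respect to A^k satisfies: Σ_{t=r}^{s} ( f_t(v_t^K) + λG‖v_t^K − v_{t+1}^K‖ ) − Σ_{t=r}^{s} ( f_t(w_t^k) + λG‖w_t^k − w_{t+1}^k‖ ) ≤ G·D·max(√λ, 1)·( (12c + 53)·√(n^(k)·log T) + 9 + 6c + 6·(K − k) ). -/

import Mathlib

/-- The Gauss error function. -/
noncomputable def erf (x : ℝ) : ℝ :=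
  (2 / Real.sqrt Real.pi) * ∫ s in (0:ℝ)..x, Real.exp (-s ^ 2)

/-- The unclipped confidence function of Discounted-Normal-Predictor. -/
noncomputable def gtilde (n Z x : ℝ) : ℝ :=
  Real.sqrt (n / 8) * Z * erf (x / Real.sqrt (8 * n)) * Real.exp (x ^ 2 / (16 * n))

/-- The confidence function, the projection of the unclipped one onto `[0,1]`. -/
noncomputable def gconf (n Z x : ℝ) : ℝ := min (max (gtilde n Z x) 0) 1

/-- The window length of the i-th expert in smoothed OGD. -/
noncomputable def nfun (T i : ℕ) : ℝ := (T : ℝ) * (2 : ℝ) ^ ((1 : ℤ) - (i : ℤ))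

/-- The step size of the i-th OGD expert in smoothed OGD. -/
noncomputable def etafun (T : ℕ) (D G lam : ℝ) (i : ℕ) : ℝ :=
  (D / G) * Real.sqrt (1 / ((1 + 2 * lam) * nfun T i))

/-!
The slope of the confidence function `g` at `x` is at most `Z / 6 + x * g x / (8 * n)`, because
`gtilde` solves a linear differential equation. The discount `1 - 1 / n` of DNP-cu gains
`g x * x / n` in every round, which pays both for the second-order error of the potential
`Φ x = ∫ s in 0..x, g s` and for the movement of the weight `g`, up to an error `Z`. Telescoping `Φ`
bounds the regret against the constant weight `0`, and telescoping `Φ x - x` bounds the regret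
against the constant weight `1`.

Hence a layer that combines two slow strategies loses little to either of them. Going from `A^k` to
`B^K`, layer `k` is charged its regret against weight `1`, and each later layer `i` its regret
against weight `0`. The latter is of order `U (n^(i))`, at most `4 * √(n^(i) * log (1 / Z))`, and
these terms sum geometrically. The same geometric decay shows that every layer again moves slowly,
so that the bits fed to the next predictor have the required size.
-/

open Finset

section Erf

lemma hasDerivAt_erf (x : ℝ) :
    HasDerivAt erf (2 / √Real.pi * Real.exp (-x ^ 2)) x := by
  have hcont : Continuous fun s : ℝ => Real.exp (-s ^ 2) := by fun_prop
  exact (intervalIntegral.integral_hasDerivAt_right (hcont.intervalIntegrable _ _)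
    (hcont.stronglyMeasurableAtFilter _ _) hcont.continuousAt).const_mul _

lemma erf_zero : erf 0 = 0 := by simp [erf]

lemma erf_monotone : Monotone erf :=
  monotone_of_hasDerivAt_nonneg hasDerivAt_erf fun x => by
    simp only [Pi.zero_apply]
    positivity

lemma erf_nonneg {x : ℝ} (hx : 0 ≤ x) : 0 ≤ erf x :=
  erf_zero ▸ erf_monotone hx

lemma erf_nonpos {x : ℝ} (hx : x ≤ 0) : erf x ≤ 0 :=
  erf_zero ▸ erf_monotone hx

lemma half_le_erf_one : 1 / 2 ≤ erf 1 := by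
  have hcont : Continuous fun s : ℝ => Real.exp (-s ^ 2) := by fun_prop
  have hcont' : Continuous fun s : ℝ => 1 - s ^ 2 := by fun_prop
  have hint : (2 : ℝ) / 3 ≤ ∫ s in (0 : ℝ)..1, Real.exp (-s ^ 2) := by
    calc (2 : ℝ) / 3 = ∫ s in (0 : ℝ)..1, (1 - s ^ 2) := by
          rw [intervalIntegral.integral_sub (by simp) (by simp)]
          norm_num
      _ ≤ _ := by
          refine intervalIntegral.integral_mono_on zero_le_one (hcont'.intervalIntegrable _ _)
            (hcont.intervalIntegrable _ _) fun s _ => ?_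
          linarith [Real.add_one_le_exp (-s ^ 2)]
  have hpi : 1 ≤ 2 / √Real.pi := by
    rw [one_le_div (by positivity), Real.sqrt_le_left (by norm_num)]
    linarith [Real.pi_le_four]
  unfold erf
  nlinarith

end Erf

section Gtilde

variable {n Z U u v x : ℝ}

lemma gtilde_zero (n Z : ℝ) : gtilde n Z 0 = 0 := by simp [gtilde, erf_zero]

lemma gtilde_nonneg (hZ : 0 ≤ Z) (hx : 0 ≤ x) : 0 ≤ gtilde n Z x := by
  have := erf_nonneg (x := x / √(8 * n)) (by positivity)
  unfold gtilde
  positivity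

lemma gtilde_nonpos (hZ : 0 ≤ Z) (hx : x ≤ 0) : gtilde n Z x ≤ 0 := by
  have := erf_nonpos (div_nonpos_of_nonpos_of_nonneg hx (Real.sqrt_nonneg (8 * n)))
  exact mul_nonpos_of_nonpos_of_nonneg (mul_nonpos_of_nonneg_of_nonpos (by positivity) this)
    (by positivity)

lemma sqrt_div_eight_mul_inv_sqrt (hn : 0 < n) : √(n / 8) * (1 / √(8 * n)) = 1 / 8 := by
  rw [one_div √(8 * n), ← Real.sqrt_inv, ← Real.sqrt_mul (by positivity),
    show n / 8 * (8 * n)⁻¹ = (1 / 8) ^ 2 by field_simp, Real.sqrt_sq (by norm_num)]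

lemma hasDerivAt_gtilde (Z x : ℝ) (hn : 0 < n) :
    HasDerivAt (gtilde n Z) (Z / (4 * √Real.pi) * Real.exp (-(x ^ 2 / (16 * n)))
      + x / (8 * n) * gtilde n Z x) x := by
  have herf : HasDerivAt (fun y => erf (y / √(8 * n)))
      (2 / √Real.pi * Real.exp (-(x / √(8 * n)) ^ 2) * (1 / √(8 * n))) x :=
    HasDerivAt.comp (h₂ := erf) x (hasDerivAt_erf (x / √(8 * n)))
      ((hasDerivAt_id x).div_const _)
  have hexp : HasDerivAt (fun y : ℝ => Real.exp (y ^ 2 / (16 * n)))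
      (Real.exp (x ^ 2 / (16 * n)) * (2 * x / (16 * n))) x := by
    simpa using (((hasDerivAt_id x).pow 2).div_const (16 * n)).exp
  refine ((herf.const_mul (√(n / 8) * Z)).mul hexp).congr_deriv ?_
  have hsq : (x / √(8 * n)) ^ 2 = x ^ 2 / (8 * n) := by
    rw [div_pow, Real.sq_sqrt (by positivity)]
  have hsplit : Real.exp (-(x ^ 2 / (16 * n))) =
      Real.exp (-(x ^ 2 / (8 * n))) * Real.exp (x ^ 2 / (16 * n)) := by
    rw [← Real.exp_add]
    congr 1
    field_simp
    ring
  have hcoef : Z / (4 * √Real.pi) = √(n / 8) * (1 / √(8 * n)) * Z * (2 / √Real.pi) := by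
    rw [sqrt_div_eight_mul_inv_sqrt hn]
    field_simp
    ring
  rw [hsq, hsplit, hcoef, gtilde]
  field_simp
  ring

lemma gtilde_strictMonoOn (hn : 0 < n) (hZ : 0 < Z) : StrictMonoOn (gtilde n Z) (Set.Ici 0) := by
  refine strictMonoOn_of_deriv_pos (convex_Ici 0)
    (fun x _ => (hasDerivAt_gtilde Z x hn).continuousAt.continuousWithinAt) fun x hx => ?_
  rw [interior_Ici, Set.mem_Ioi] at hx
  have := gtilde_nonneg (n := n) hZ.le hx.le
  rw [(hasDerivAt_gtilde Z x hn).deriv]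
  positivity

lemma deriv_gtilde_le (hn : 0 < n) (hZ : 0 ≤ Z) :
    deriv (gtilde n Z) x ≤ Z / 6 + x * gtilde n Z x / (8 * n) := by
  have hpi : (3 / 2 : ℝ) ≤ √Real.pi :=
    Real.le_sqrt_of_sq_le (by linarith [Real.pi_gt_three])
  have hexp : Real.exp (-(x ^ 2 / (16 * n))) ≤ 1 :=
    Real.exp_le_one_iff.2 (neg_nonpos.2 (by positivity))
  calc deriv (gtilde n Z) x
      = Z / (4 * √Real.pi) * Real.exp (-(x ^ 2 / (16 * n))) + x * gtilde n Z x / (8 * n) := by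
        rw [(hasDerivAt_gtilde Z x hn).deriv, div_mul_eq_mul_div x]
    _ ≤ Z / 6 * 1 + x * gtilde n Z x / (8 * n) := by gcongr; linarith
    _ = _ := by rw [mul_one]

lemma gtilde_sub_le (hn : 0 < n) (hZ : 0 < Z) (hu : 0 ≤ u) (huv : u ≤ v) :
    gtilde n Z v - gtilde n Z u ≤ (v - u) * (Z / 6 + v * gtilde n Z v / (8 * n)) := by
  have hdiff : Differentiable ℝ (gtilde n Z) := fun x => (hasDerivAt_gtilde Z x hn).differentiableAt
  rw [mul_comm]
  refine (convex_Icc u v).image_sub_le_mul_sub_of_deriv_le hdiff.continuous.continuousOn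
    hdiff.differentiableOn (fun x hx => (deriv_gtilde_le hn hZ.le).trans ?_)
    u ⟨le_rfl, huv⟩ v ⟨huv, le_rfl⟩ huv
  rw [interior_Icc] at hx
  have hx0 : 0 ≤ x := hu.trans hx.1.le
  have hmono : gtilde n Z x ≤ gtilde n Z v :=
    (gtilde_strictMonoOn hn hZ).monotoneOn hx0 (hu.trans huv) hx.2.le
  have := gtilde_nonneg (n := n) hZ.le hx0
  gcongr
  · exact hx0.trans hx.2.le
  · exact hx.2.le

lemma one_le_gtilde (hn : 32 ≤ n) (hZ : 0 < Z) (hL : 1 ≤ Real.log (1 / Z)) :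
    1 ≤ gtilde n Z (4 * √(n * Real.log (1 / Z))) := by
  set L := Real.log (1 / Z) with hLdef
  have hexp : Real.exp ((4 * √(n * L)) ^ 2 / (16 * n)) = 1 / Z := by
    rw [mul_pow, Real.sq_sqrt (by positivity), show 4 ^ 2 * (n * L) / (16 * n) = L by
      field_simp; norm_num, hLdef, Real.exp_log (by positivity)]
  have harg : 1 ≤ 4 * √(n * L) / √(8 * n) := by
    rw [one_le_div (by positivity), Real.sqrt_le_left (by positivity), mul_pow,
      Real.sq_sqrt (by positivity)]
    nlinarith
  have herf : 1 / 2 ≤ erf (4 * √(n * L) / √(8 * n)) := half_le_erf_one.trans (erf_monotone harg)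
  have hsqrt : 2 ≤ √(n / 8) := Real.le_sqrt_of_sq_le (by linarith)
  calc (1 : ℝ) = 2 * (1 / 2) := by norm_num
    _ ≤ √(n / 8) * erf (4 * √(n * L) / √(8 * n)) := by gcongr
    _ = gtilde n Z (4 * √(n * L)) := by
        rw [gtilde, hexp]
        field_simp

lemma le_of_gtilde_eq_one (hn : 32 ≤ n) (hZ : 0 < Z) (hL : 1 ≤ Real.log (1 / Z)) (hU : 0 ≤ U)
    (hgU : gtilde n Z U = 1) : U ≤ 4 * √(n * Real.log (1 / Z)) := by
  have hmono := gtilde_strictMonoOn (n := n) (by linarith) hZ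
  refine (hmono.le_iff_le hU (Set.mem_Ici.2 (by positivity))).1 ?_
  exact hgU.trans_le (one_le_gtilde hn hZ hL)

end Gtilde

section Confidence

/-- The properties of a DNP-cu confidence function with parameters `(n, Z)` and threshold `U` that
enter the analysis. The bound `sub_le` is the integrated form of the slope condition
`g' ≤ Z / 6 + x * g x / (8 * n)` on `[0, U]`. -/
structure IsConfidence (g : ℝ → ℝ) (n Z U : ℝ) : Prop where
  monotone : Monotone g
  eq_zero : ∀ x ≤ 0, g x = 0
  eq_one : ∀ x, U ≤ x → g x = 1
  sub_le : ∀ u v, u ≤ v → g v - g u ≤ (v - u) * (Z / 6 + min v U * g v / (8 * n))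

variable {g : ℝ → ℝ} {n Z U : ℝ}

lemma IsConfidence.nonneg (h : IsConfidence g n Z U) (x : ℝ) : 0 ≤ g x :=
  (h.eq_zero _ (min_le_right x 0)).symm.trans_le (h.monotone (min_le_left x 0))

lemma IsConfidence.le_one (h : IsConfidence g n Z U) (x : ℝ) : g x ≤ 1 :=
  (h.monotone (le_max_left x U)).trans_eq (h.eq_one _ (le_max_right x U))

lemma gconf_eq_gtilde_clamp (hn : 0 < n) (hZ : 0 < Z) (hU : 0 ≤ U) (hgU : gtilde n Z U = 1)
    (x : ℝ) : gconf n Z x = gtilde n Z (min (max x 0) U) := by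
  have hmono := (gtilde_strictMonoOn hn hZ).monotoneOn
  unfold gconf
  rcases le_total x 0 with hx | hx
  · rw [max_eq_right (gtilde_nonpos hZ.le hx), max_eq_right hx, min_eq_left hU, gtilde_zero,
      min_eq_left zero_le_one]
  rw [max_eq_left (gtilde_nonneg hZ.le hx), max_eq_left hx]
  rcases le_total x U with hxU | hxU
  · rw [min_eq_left hxU, min_eq_left (hgU ▸ hmono hx hU hxU)]
  · rw [min_eq_right hxU, hgU, min_eq_right (hgU ▸ hmono hU hx hxU)]

lemma isConfidence_gconf (hn : 0 < n) (hZ : 0 < Z) (hU : 0 ≤ U) (hgU : gtilde n Z U = 1) :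
    IsConfidence (gconf n Z) n Z U := by
  have hclamp := gconf_eq_gtilde_clamp hn hZ hU hgU
  have hclamp_nonneg (x : ℝ) : 0 ≤ min (max x 0) U := le_min (le_max_right _ _) hU
  have hclamp_mono {u v : ℝ} (huv : u ≤ v) : min (max u 0) U ≤ min (max v 0) U :=
    min_le_min_right _ (max_le_max_right _ huv)
  have hzero (x : ℝ) (hx : x ≤ 0) : gconf n Z x = 0 := by
    rw [hclamp, max_eq_right hx, min_eq_left hU, gtilde_zero]
  refine ⟨fun u v huv => ?_, hzero, fun x hx => ?_, fun u v huv => ?_⟩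
  · rw [hclamp, hclamp]
    exact (gtilde_strictMonoOn hn hZ).monotoneOn (hclamp_nonneg u) (hclamp_nonneg v)
      (hclamp_mono huv)
  · rw [hclamp, max_eq_left (hU.trans hx), min_eq_right hx, hgU]
  rcases le_total v 0 with hv | hv
  · have : 0 ≤ v - u := by linarith
    rw [hzero v hv, hzero u (huv.trans hv), mul_zero, zero_div, sub_zero]
    positivity
  have hlen : min (max v 0) U - min (max u 0) U ≤ v - u := by
    grind
  have := gtilde_nonneg (n := n) hZ.le (hclamp_nonneg v)
  rw [hclamp, hclamp]
  refine (gtilde_sub_le hn hZ (hclamp_nonneg u) (hclamp_mono huv)).trans ?_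
  have := hclamp_nonneg v
  rw [max_eq_left hv] at *
  gcongr

end Confidence

section Step

variable {g : ℝ → ℝ} {n Z U m x y d : ℝ}

lemma IsConfidence.le_mul_of_le (h : IsConfidence g n Z U) (hn : 1 ≤ n) (hZ : 0 ≤ Z) (hU : 0 ≤ U)
    (hd0 : 0 ≤ d) (hd1 : d ≤ 1) (hx : x ≤ d) : g x ≤ d * (Z / 5) := by
  rcases le_total x 0 with hx0 | hx0
  · rw [h.eq_zero x hx0]
    positivity
  have hgx := h.nonneg x
  have hmin : min x U ≤ 1 := (min_le_left _ _).trans (hx.trans hd1)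
  have : 0 ≤ min x U := le_min hx0 hU
  have hslope : min x U * g x / (8 * n) ≤ 1 * g x / (8 * 1) := by gcongr
  have hself : g x ≤ d * (Z / 6 + g x / 8) := by
    calc g x = g x - g 0 := by rw [h.eq_zero 0 le_rfl, sub_zero]
      _ ≤ (x - 0) * (Z / 6 + min x U * g x / (8 * n)) := h.sub_le 0 x hx0
      _ ≤ d * (Z / 6 + g x / 8) := by
        exact mul_le_mul (by linarith) (by linarith) (by positivity) hd0
  nlinarith

/-- The parameter range in which DNP-cu with parameters `(n, Z)` and threshold `U` tolerates bits
of size `1 / m`. -/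
structure IsDNPScale (m n Z U : ℝ) : Prop where
  one_le : 1 ≤ m
  sq_le : 32 * m ^ 2 ≤ n
  Z_pos : 0 < Z
  U_pos : 0 < U
  mul_le : m * U ≤ 4 / 5 * n

lemma IsDNPScale.m_pos (hs : IsDNPScale m n Z U) : 0 < m := zero_lt_one.trans_le hs.one_le

lemma IsDNPScale.mul_m_le (hs : IsDNPScale m n Z U) : 32 * m ≤ n := by
  nlinarith [hs.one_le, hs.sq_le]

lemma IsDNPScale.le_n (hs : IsDNPScale m n Z U) : 32 ≤ n := by
  linarith [hs.one_le, hs.mul_m_le]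

lemma IsDNPScale.n_pos (hs : IsDNPScale m n Z U) : 0 < n := by
  linarith [hs.le_n]

lemma IsDNPScale.one_div_le_one (hs : IsDNPScale m n Z U) : 1 / m ≤ 1 :=
  (div_le_one hs.m_pos).2 hs.one_le

lemma IsDNPScale.div_le (hs : IsDNPScale m n Z U) (hx : x ≤ U + 1 / m) : x / n ≤ 1 / m := by
  have hm := hs.m_pos
  have hmx : m * x ≤ m * U + 1 := by
    calc m * x ≤ m * (U + 1 / m) := by gcongr
      _ = m * U + 1 := by field_simp
  rw [div_le_div_iff₀ hs.n_pos hm]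
  linarith [hs.mul_le, hs.le_n]

lemma IsDNPScale.neg_le_div (hs : IsDNPScale m n Z U) (hx : -(1 / m) ≤ x) : -(1 / m) ≤ x / n := by
  rw [le_div_iff₀ hs.n_pos]
  nlinarith [one_div_pos.2 hs.m_pos, hs.le_n]

lemma IsConfidence.step_le_of_nonpos (h : IsConfidence g n Z U) (hs : IsDNPScale m n Z U)
    (hx : x ≤ 0) (hxy : y - x ≤ 2) (hy : y ≤ 1 / m) :
    (g y - g x) * (y - x) + m / 3 * |g y - g x| ≤ g x * x / n + Z := by
  have hm := hs.m_pos
  have hgy := h.nonneg y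
  have hsmall : m * g y ≤ Z / 5 := by
    calc m * g y ≤ m * (1 / m * (Z / 5)) := by
          gcongr
          exact h.le_mul_of_le (by linarith [hs.le_n]) hs.Z_pos.le hs.U_pos.le (by positivity)
            hs.one_div_le_one hy
      _ = Z / 5 := by field_simp
  have hle : g y ≤ m * g y := le_mul_of_one_le_left hgy hs.one_le
  have hmul : g y * (y - x) ≤ g y * 2 := by gcongr
  rw [h.eq_zero x hx, sub_zero, abs_of_nonneg hgy, zero_mul, zero_div]
  linarith [hs.Z_pos]

lemma IsConfidence.div_le_mul_div_add (h : IsConfidence g n Z U) (hs : IsDNPScale m n Z U)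
    (hx : 0 ≤ x) : g x / n ≤ g x * x / n + Z := by
  have hn := hs.n_pos
  have hZ := hs.Z_pos
  have hgx := h.nonneg x
  rcases le_total 1 x with hx1 | hx1
  · have : g x / n ≤ g x * x / n := by
      gcongr
      exact le_mul_of_one_le_right hgx hx1
    linarith
  · have hgZ := h.le_mul_of_le (by linarith [hs.le_n]) hZ.le hs.U_pos.le zero_le_one le_rfl hx1
    have hdiv : g x / n ≤ g x := div_le_self hgx (by linarith [hs.le_n])
    have : 0 ≤ g x * x / n := by positivity
    linarith

lemma IsConfidence.step_le_of_le (h : IsConfidence g n Z U) (hs : IsDNPScale m n Z U)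
    (hx : 0 ≤ x) (hxy : x ≤ y) (hyx : y - x ≤ 1 / m) :
    (g y - g x) * (y - x) + m / 3 * |g y - g x| ≤ g x * x / n + Z := by
  have hm := hs.m_pos
  have hn := hs.n_pos
  have hZ := hs.Z_pos
  have hgx := h.nonneg x
  have hgy := h.nonneg y
  have hd1 : y - x ≤ 1 := hyx.trans hs.one_div_le_one
  have hU_div : U / n ≤ 1 := by
    rw [div_le_one hn]
    nlinarith [hs.mul_le, hs.U_pos, hs.one_le]
  obtain ⟨Δ, hΔ⟩ : ∃ Δ, Δ = g y - g x := ⟨_, rfl⟩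
  have hΔ0 : 0 ≤ Δ := hΔ ▸ sub_nonneg.2 (h.monotone hxy)
  have hmin : 0 ≤ min y U := le_min (hx.trans hxy) hs.U_pos.le
  have hslope : min y U * g y / n ≤ g x * x / n + g x / n + Δ := by
    calc min y U * g y / n = min y U * (g x / n) + min y U / n * Δ := by rw [hΔ]; ring
      _ ≤ (x + 1) * (g x / n) + 1 * Δ := by
        gcongr
        · exact (min_le_left _ _).trans (by linarith)
        · exact (div_le_div_of_nonneg_right (min_le_right _ _) hn.le).trans hU_div
      _ = _ := by ring
  have hmΔ : m * Δ ≤ Z / 6 + min y U * g y / n / 8 := by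
    calc m * Δ ≤ m * (1 / m * (Z / 6 + min y U * g y / (8 * n))) := by
          gcongr
          exact hΔ ▸ (h.sub_le x y hxy).trans (by gcongr)
      _ = _ := by field_simp
  have hΔ_le : Δ ≤ m * Δ := le_mul_of_one_le_left hΔ0 hs.one_le
  have hquad : Δ * (y - x) ≤ m * Δ := (mul_le_of_le_one_right hΔ0 hd1).trans hΔ_le
  have hX : 0 ≤ g x * x / n := by positivity
  have := h.div_le_mul_div_add hs hx
  rw [← hΔ, abs_of_nonneg hΔ0]
  linarith

lemma IsConfidence.step_le_of_ge (h : IsConfidence g n Z U) (hs : IsDNPScale m n Z U)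
    (hx : 0 ≤ x) (hyx : y ≤ x) (hxy : x - y ≤ 2 / m) :
    (g y - g x) * (y - x) + m / 3 * |g y - g x| ≤ g x * x / n + Z := by
  have hm := hs.m_pos
  have hn := hs.n_pos
  have hZ := hs.Z_pos
  have hgx := h.nonneg x
  have : 0 ≤ x - y := sub_nonneg.2 hyx
  have hX : 0 ≤ g x * x / n := by positivity
  have hslope : min x U * g x / (8 * n) ≤ g x * x / n / 8 := by
    calc min x U * g x / (8 * n) ≤ x * g x / (8 * n) := by gcongr; exact min_le_left _ _
      _ = _ := by field_simp
  have hdrop : g x - g y ≤ (x - y) * (Z / 6 + g x * x / n / 8) :=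
    (h.sub_le y x hyx).trans (by gcongr)
  have hinv : 1 / m * (1 / m) ≤ 1 :=
    mul_le_one₀ hs.one_div_le_one (by positivity) hs.one_div_le_one
  have hquad : (x - y) * (x - y + m / 3) ≤ 6 := by
    calc (x - y) * (x - y + m / 3) ≤ 2 / m * (2 / m + m / 3) := by gcongr
      _ = 4 * (1 / m * (1 / m)) + 2 / 3 := by field_simp; ring
      _ ≤ 6 := by linarith
  rw [abs_sub_comm, abs_of_nonneg (sub_nonneg.2 (h.monotone hyx))]
  calc (g y - g x) * (y - x) + m / 3 * (g x - g y) = (g x - g y) * (x - y + m / 3) := by ring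
    _ ≤ (x - y) * (Z / 6 + g x * x / n / 8) * (x - y + m / 3) := by gcongr
    _ = (x - y) * (x - y + m / 3) * (Z / 6 + g x * x / n / 8) := by ring
    _ ≤ 6 * (Z / 6 + g x * x / n / 8) := by gcongr
    _ ≤ g x * x / n + Z := by linarith

/-- The antiderivative `Φ` of the confidence function, the potential of the regret analysis. -/
noncomputable def potential (g : ℝ → ℝ) (x : ℝ) : ℝ := ∫ s in (0 : ℝ)..x, g s

lemma potential_zero (g : ℝ → ℝ) : potential g 0 = 0 := by simp [potential]

lemma potential_sub_le (hg : Monotone g) (x y : ℝ) :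
    potential g y - potential g x ≤ g y * (y - x) := by
  have hint (a b : ℝ) : IntervalIntegrable g MeasureTheory.volume a b := hg.intervalIntegrable
  unfold potential
  rw [intervalIntegral.integral_interval_sub_left (hint _ _) (hint _ _)]
  rcases le_total x y with hxy | hxy
  · calc ∫ s in x..y, g s ≤ ∫ _ in x..y, g y :=
        intervalIntegral.integral_mono_on hxy (hint _ _) (by simp) fun s hs => hg hs.2
      _ = g y * (y - x) := by simp [mul_comm]
  · have hle : ∫ _ in y..x, g y ≤ ∫ s in y..x, g s :=
      intervalIntegral.integral_mono_on hxy (by simp) (hint _ _) fun s hs => hg hs.1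
    rw [intervalIntegral.integral_const, smul_eq_mul] at hle
    rw [intervalIntegral.integral_symm]
    linarith

lemma IsConfidence.potential_nonneg (h : IsConfidence g n Z U) (x : ℝ) : 0 ≤ potential g x := by
  have := potential_sub_le h.monotone x 0
  rw [h.eq_zero 0 le_rfl, potential_zero] at this
  linarith

lemma IsConfidence.potential_le_max (h : IsConfidence g n Z U) (x : ℝ) :
    potential g x ≤ max x 0 := by
  have hle := potential_sub_le h.monotone 0 x
  rw [potential_zero, sub_zero, sub_zero] at hle
  rcases le_total x 0 with hx | hx
  · rw [h.eq_zero x hx, zero_mul] at hle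
    exact hle.trans (le_max_right _ _)
  · exact (hle.trans (mul_le_of_le_one_left hx (h.le_one x))).trans (le_max_left _ _)

lemma IsConfidence.sub_le_potential (h : IsConfidence g n Z U) (x : ℝ) :
    x - U ≤ potential g x := by
  have := potential_sub_le h.monotone x U
  rw [h.eq_one U le_rfl] at this
  linarith [h.potential_nonneg U]

end Step

section DNPcu

/-- The part of the bit `b` that DNP-cu adds to its deviation `x`: conservative updating drops a bit
that would push `x` further out of `[0, U]`. -/
noncomputable def effectiveBit (U x b : ℝ) : ℝ :=
  if (0 ≤ x ∧ x ≤ U) ∨ (x < 0 ∧ 0 < b) ∨ (U < x ∧ b < 0) then b else 0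

/-- The deviations `x 1, …, x (T + 1)` of DNP-cu with parameter `n` and threshold `U`, run on the
bits `b 1, …, b T`. -/
structure IsDNPcu (n U : ℝ) (T : ℕ) (b x : ℕ → ℝ) : Prop where
  one : x 1 = 0
  succ : ∀ t, 1 ≤ t → t ≤ T → x (t + 1) =
    if (0 ≤ x t ∧ x t ≤ U) ∨ (x t < 0 ∧ 0 < b t) ∨ (U < x t ∧ b t < 0)
    then (1 - 1 / n) * x t + b t else (1 - 1 / n) * x t

variable {g : ℝ → ℝ} {n Z U m y β : ℝ} {T r s t : ℕ} {b x : ℕ → ℝ}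

lemma abs_effectiveBit_le (U y β : ℝ) : |effectiveBit U y β| ≤ |β| := by
  unfold effectiveBit
  split_ifs <;> simp

lemma effectiveBit_nonneg (hU : 0 ≤ U) (hy : y < 0) : 0 ≤ effectiveBit U y β := by
  grind [effectiveBit]

lemma effectiveBit_nonpos (hU : 0 ≤ U) (hy : U < y) : effectiveBit U y β ≤ 0 := by
  grind [effectiveBit]

lemma IsConfidence.mul_effectiveBit_le (h : IsConfidence g n Z U) (y β : ℝ) :
    g y * effectiveBit U y β ≤ g y * β := by
  unfold effectiveBit
  split_ifs with hkeep
  · exact le_rfl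
  rcases lt_or_ge y 0 with hy | hy
  · rw [h.eq_zero y hy.le, zero_mul, zero_mul]
  · rw [h.eq_one y (by grind)]
    grind

lemma IsConfidence.mul_effectiveBit_sub_le (h : IsConfidence g n Z U) (y β : ℝ) :
    g y * effectiveBit U y β - effectiveBit U y β ≤ g y * β - β := by
  unfold effectiveBit
  split_ifs with hkeep
  · exact le_rfl
  rcases lt_or_ge y 0 with hy | hy
  · rw [h.eq_zero y hy.le]
    grind
  · rw [h.eq_one y (by grind), one_mul, one_mul, sub_self, sub_self]

lemma IsDNPcu.succ_eq (hx : IsDNPcu n U T b x) (ht : 1 ≤ t) (htT : t ≤ T) :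
    x (t + 1) = (1 - 1 / n) * x t + effectiveBit U (x t) (b t) := by
  rw [hx.succ t ht htT, effectiveBit]
  split_ifs <;> simp

lemma IsDNPcu.succ_sub_eq (hx : IsDNPcu n U T b x) (ht : 1 ≤ t) (htT : t ≤ T) :
    x (t + 1) - x t = effectiveBit U (x t) (b t) - x t / n := by
  rw [hx.succ_eq ht htT]
  ring

lemma IsDNPcu.mem_Icc (hx : IsDNPcu n U T b x) (hs : IsDNPScale m n Z U)
    (hb : ∀ t, 1 ≤ t → t ≤ T → |b t| ≤ 1 / m) (ht : 1 ≤ t) (htT : t ≤ T + 1) :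
    x t ∈ Set.Icc (-(1 / m)) (U + 1 / m) := by
  have hm : 0 < 1 / m := one_div_pos.2 hs.m_pos
  have hU := hs.U_pos
  have hρ0 : 0 ≤ 1 - 1 / n := sub_nonneg.2 ((div_le_one hs.n_pos).2 (by linarith [hs.le_n]))
  have hρ1 : 1 - 1 / n ≤ 1 := sub_le_self _ (one_div_pos.2 hs.n_pos).le
  induction t, ht using Nat.le_induction with
  | base => rw [hx.one]; constructor <;> linarith
  | succ t ht ih =>
    obtain ⟨hlow, hupp⟩ := ih (by omega)
    have hc := abs_le.1 ((abs_effectiveBit_le U (x t) (b t)).trans (hb t ht (by omega)))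
    rw [hx.succ_eq ht (by omega)]
    rcases lt_or_ge (x t) 0 with hneg | hnonneg
    · have := effectiveBit_nonneg (β := b t) hU.le hneg
      constructor <;> nlinarith
    have := mul_nonneg hρ0 hnonneg
    rcases le_or_gt (x t) U with hle | hgt
    · constructor <;> nlinarith
    · have := effectiveBit_nonpos (β := b t) hU.le hgt
      constructor <;> nlinarith

lemma IsDNPcu.abs_succ_sub_le (hx : IsDNPcu n U T b x) (hs : IsDNPScale m n Z U)
    (hb : ∀ t, 1 ≤ t → t ≤ T → |b t| ≤ 1 / m) (ht : 1 ≤ t) (htT : t ≤ T) :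
    |x (t + 1) - x t| ≤ 2 / m := by
  obtain ⟨hlow, hupp⟩ := hx.mem_Icc hs hb ht (by omega)
  calc |x (t + 1) - x t| = |effectiveBit U (x t) (b t) - x t / n| := by
        rw [hx.succ_sub_eq ht htT]
    _ ≤ |effectiveBit U (x t) (b t)| + |x t / n| := abs_sub _ _
    _ ≤ 1 / m + 1 / m := by
        gcongr
        · exact (abs_effectiveBit_le _ _ _).trans (hb t ht htT)
        · exact abs_le.2 ⟨hs.neg_le_div hlow, hs.div_le hupp⟩
    _ = 2 / m := by ring

lemma IsConfidence.abs_sub_le (h : IsConfidence g n Z U) (hs : IsDNPScale m n Z U)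
    (y z : ℝ) : |g y - g z| ≤ |y - z| * (Z / 6 + U / (8 * n)) := by
  wlog hyz : z ≤ y generalizing y z
  · rw [abs_sub_comm, abs_sub_comm y]
    exact this z y (le_of_not_ge hyz)
  have hn := hs.n_pos
  have hU := hs.U_pos
  have hslope : min y U * g y ≤ U * 1 :=
    mul_le_mul (min_le_right _ _) (h.le_one y) (h.nonneg y) hU.le
  rw [abs_of_nonneg (sub_nonneg.2 hyz), abs_of_nonneg (sub_nonneg.2 (h.monotone hyz)), ← mul_one U]
  exact (h.sub_le z y hyz).trans (by have := sub_nonneg.2 hyz; gcongr)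

lemma IsDNPcu.abs_weight_sub_le (hx : IsDNPcu n U T b x) (h : IsConfidence g n Z U)
    (hs : IsDNPScale m n Z U) (hb : ∀ t, 1 ≤ t → t ≤ T → |b t| ≤ 1 / m) (ht : 1 ≤ t)
    (htT : t ≤ T) : |g (x (t + 1)) - g (x t)| ≤ 2 / m * (Z / 6 + U / (8 * n)) := by
  have := hs.n_pos
  have := hs.Z_pos
  have := hs.U_pos
  exact (h.abs_sub_le hs _ _).trans (by gcongr; exact hx.abs_succ_sub_le hs hb ht htT)

lemma IsDNPcu.step_le (hx : IsDNPcu n U T b x) (h : IsConfidence g n Z U)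
    (hs : IsDNPScale m n Z U) (hb : ∀ t, 1 ≤ t → t ≤ T → |b t| ≤ 1 / m) (ht : 1 ≤ t)
    (htT : t ≤ T) :
    (g (x (t + 1)) - g (x t)) * (x (t + 1) - x t) + m / 3 * |g (x (t + 1)) - g (x t)|
      ≤ g (x t) * x t / n + Z := by
  have habs := abs_le.1 (hx.abs_succ_sub_le hs hb ht htT)
  have hbit := (abs_le.1 ((abs_effectiveBit_le U (x t) (b t)).trans (hb t ht htT))).2
  have hsucc := hx.succ_sub_eq ht htT
  rcases lt_or_ge (x t) 0 with hneg | hnonneg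
  · have h2 : 2 / m ≤ 2 := div_le_self zero_le_two hs.one_le
    have hdiscount : x t ≤ x t / n := by
      rw [le_div_iff₀ hs.n_pos]
      nlinarith [hs.le_n]
    exact h.step_le_of_nonpos hs hneg.le (by linarith) (by linarith)
  have := div_nonneg hnonneg hs.n_pos.le
  rcases le_total (x t) (x (t + 1)) with hle | hge
  · exact h.step_le_of_le hs hnonneg hle (by linarith)
  · exact h.step_le_of_ge hs hnonneg hge (by linarith)

lemma IsDNPcu.potential_succ_sub_le (hx : IsDNPcu n U T b x) (h : IsConfidence g n Z U)
    (hs : IsDNPScale m n Z U) (hb : ∀ t, 1 ≤ t → t ≤ T → |b t| ≤ 1 / m) (ht : 1 ≤ t)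
    (htT : t ≤ T) :
    potential g (x (t + 1)) - potential g (x t) - Z
      ≤ g (x t) * effectiveBit U (x t) (b t) - m / 3 * |g (x (t + 1)) - g (x t)| := by
  have hpot := potential_sub_le h.monotone (x t) (x (t + 1))
  have hstep := hx.step_le h hs hb ht htT
  have hbit : g (x t) * effectiveBit U (x t) (b t)
      = g (x t) * (x (t + 1) - x t) + g (x t) * x t / n := by
    rw [hx.succ_sub_eq ht htT]
    ring
  linarith

lemma sub_sub_mul_le_sum {F h : ℕ → ℝ} {e : ℝ} (hrs : r ≤ s)
    (hstep : ∀ t ∈ Icc r s, F (t + 1) - F t - e ≤ h t) :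
    F (s + 1) - F r - ((s : ℝ) - r + 1) * e ≤ ∑ t ∈ Icc r s, h t := by
  refine le_trans (le_of_eq ?_) (Finset.sum_le_sum hstep)
  rw [sum_sub_distrib, sum_Icc_sub hrs, sum_const, Nat.card_Icc, nsmul_eq_mul,
    Nat.cast_sub (by omega)]
  push_cast
  ring

lemma IsDNPcu.neg_le_sum_mul_sub (hx : IsDNPcu n U T b x) (h : IsConfidence g n Z U)
    (hs : IsDNPScale m n Z U) (hb : ∀ t, 1 ≤ t → t ≤ T → |b t| ≤ 1 / m) (hr : 1 ≤ r)
    (hrs : r ≤ s) (hsT : s ≤ T) :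
    -(U + 1 + ((s : ℝ) - r + 1) * Z)
      ≤ ∑ t ∈ Icc r s, (g (x t) * b t - m / 3 * |g (x (t + 1)) - g (x t)|) := by
  have htel := sub_sub_mul_le_sum (F := fun t => potential g (x t)) (e := Z)
    (h := fun t => g (x t) * b t - m / 3 * |g (x (t + 1)) - g (x t)|)
    hrs fun t ht => by
      rw [Finset.mem_Icc] at ht
      linarith [hx.potential_succ_sub_le h hs hb (by omega : 1 ≤ t) (by omega),
        h.mul_effectiveBit_le (x t) (b t)]
  have hstart : max (x r) 0 ≤ U + 1 :=
    max_le (by linarith [(hx.mem_Icc hs hb hr (by omega)).2, hs.one_div_le_one])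
      (by linarith [hs.U_pos])
  linarith [h.potential_nonneg (x (s + 1)), h.potential_le_max (x r)]

lemma IsDNPcu.neg_le_sum_mul_sub_sub (hx : IsDNPcu n U T b x) (h : IsConfidence g n Z U)
    (hs : IsDNPScale m n Z U) (hb : ∀ t, 1 ≤ t → t ≤ T → |b t| ≤ 1 / m) (hr : 1 ≤ r)
    (hrs : r ≤ s) (hsT : s ≤ T) :
    -(U + 1 + ((s : ℝ) - r + 1) * (Z + (U + 1) / n))
      ≤ ∑ t ∈ Icc r s, (g (x t) * b t - m / 3 * |g (x (t + 1)) - g (x t)| - b t) := by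
  have hn := hs.n_pos
  have htel := sub_sub_mul_le_sum (F := fun t => potential g (x t) - x t) (e := Z + (U + 1) / n)
    (h := fun t => g (x t) * b t - m / 3 * |g (x (t + 1)) - g (x t)| - b t)
    hrs fun t ht => by
      rw [Finset.mem_Icc] at ht
      have hdiscount : x t / n ≤ (U + 1) / n := by
        gcongr
        linarith [(hx.mem_Icc hs hb (by omega : 1 ≤ t) (by omega)).2, hs.one_div_le_one]
      linarith [hx.succ_sub_eq (by omega : 1 ≤ t) (by omega),
        hx.potential_succ_sub_le h hs hb (by omega : 1 ≤ t) (by omega),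
        h.mul_effectiveBit_sub_le (x t) (b t)]
  have hstart : max (x r) 0 ≤ x r + 1 := by
    have := (hx.mem_Icc hs hb hr (by omega)).1
    have := hs.one_div_le_one
    exact max_le (by linarith) (by linarith)
  linarith [h.sub_le_potential (x (s + 1)), h.potential_le_max (x r)]

end DNPcu

section Combination

variable {E : Type*} [NormedAddCommGroup E]

/-- The loss in round `t` of the strategy `w` plus `c` times the distance to its next prediction. -/
def switchingLoss (f : ℕ → E → ℝ) (c : ℝ) (w : ℕ → E) (t : ℕ) : ℝ :=
  f t (w t) + c * ‖w t - w (t + 1)‖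

/-- The predictions `w 1, …, w (T + 1)` stay in `W`, and every step has a switching cost of at most
`G * C`, which is stated without the factor `G`. -/
structure IsSlowIn (W : Set E) (lam C : ℝ) (T : ℕ) (w : ℕ → E) : Prop where
  mem : ∀ t, 1 ≤ t → t ≤ T + 1 → w t ∈ W
  step_le : ∀ t, 1 ≤ t → t ≤ T → lam * ‖w t - w (t + 1)‖ ≤ C

lemma IsSlowIn.mono {W : Set E} {lam C C' : ℝ} {T : ℕ} {w : ℕ → E} (hw : IsSlowIn W lam C T w)
    (hC : C ≤ C') : IsSlowIn W lam C' T w :=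
  ⟨hw.mem, fun t ht htT => (hw.step_le t ht htT).trans hC⟩

variable [NormedSpace ℝ E]

/-- Convex losses with values in `[0, G * D]` on a convex domain of diameter at most `D`, and a
switching cost `lam * G` per unit of movement. The bits fed to DNP-cu are divided by `m`, which is
`max √lam 1` in smoothed OGD. -/
structure IsSwitchingProblem (W : Set E) (G D lam m : ℝ) (T : ℕ) (f : ℕ → E → ℝ) : Prop where
  G_pos : 0 < G
  D_pos : 0 < D
  lam_nonneg : 0 ≤ lam
  one_le : 1 ≤ m
  lam_le_sq : lam ≤ m ^ 2
  convex : Convex ℝ W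
  norm_sub_le : ∀ p ∈ W, ∀ q ∈ W, ‖p - q‖ ≤ D
  convexOn : ∀ t, 1 ≤ t → t ≤ T → ConvexOn ℝ W (f t)
  mem_Icc : ∀ t, 1 ≤ t → t ≤ T → ∀ p ∈ W, f t p ∈ Set.Icc 0 (G * D)

/-- The strategy `v` is the combination of `p` and `q` with the weights `g (x t)` produced by DNP-cu
from the scaled differences `b` of their losses. The factor `1 + 2` is `1 + M` in the paper. -/
structure IsCombination (g : ℝ → ℝ) (n U G D lam m : ℝ) (T : ℕ) (f : ℕ → E → ℝ) (p q v : ℕ → E)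
    (b x : ℕ → ℝ) : Prop where
  bit : ∀ t, 1 ≤ t → t ≤ T → b t =
    (switchingLoss f (lam * G) p t - switchingLoss f (lam * G) q t) / ((1 + 2) * G * D) / m
  dnp : IsDNPcu n U T b x
  eq : ∀ t, 1 ≤ t → t ≤ T + 1 → v t = (1 - g (x t)) • p t + g (x t) • q t

lemma norm_convexComb_sub_convexComb_le (p p' q q' : E) {a a' D : ℝ} (ha0 : 0 ≤ a) (ha1 : a ≤ 1)
    (hD : ‖p' - q'‖ ≤ D) :
    ‖((1 - a) • p + a • q) - ((1 - a') • p' + a' • q')‖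
      ≤ (1 - a) * ‖p - p'‖ + a * ‖q - q'‖ + |a' - a| * D := by
  have hsplit : ((1 - a) • p + a • q) - ((1 - a') • p' + a' • q')
      = (1 - a) • (p - p') + a • (q - q') + (a' - a) • (p' - q') := by module
  rw [hsplit]
  refine norm_add₃_le.trans ?_
  rw [norm_smul, norm_smul, norm_smul, Real.norm_of_nonneg (sub_nonneg.2 ha1),
    Real.norm_of_nonneg ha0, Real.norm_eq_abs]
  gcongr

variable {W : Set E} {g : ℝ → ℝ} {n Z U G D lam m C : ℝ} {T r s t : ℕ} {f : ℕ → E → ℝ}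
  {p q v w : ℕ → E} {b x : ℕ → ℝ}

lemma IsSwitchingProblem.switchingLoss_mem_Icc (hf : IsSwitchingProblem W G D lam m T f)
    (hw : IsSlowIn W lam (2 * D) T w) (ht : 1 ≤ t) (htT : t ≤ T) :
    switchingLoss f (lam * G) w t ∈ Set.Icc 0 ((1 + 2) * G * D) := by
  have hG := hf.G_pos
  have hlam := hf.lam_nonneg
  obtain ⟨hlow, hupp⟩ := hf.mem_Icc t ht htT (w t) (hw.mem t ht (by omega))
  unfold switchingLoss
  refine ⟨by positivity, ?_⟩
  calc f t (w t) + lam * G * ‖w t - w (t + 1)‖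
      = f t (w t) + G * (lam * ‖w t - w (t + 1)‖) := by ring
    _ ≤ G * D + G * (2 * D) := by gcongr ?_ + G * ?_; exact hw.step_le t ht htT
    _ = _ := by ring

lemma IsCombination.abs_bit_le (hv : IsCombination g n U G D lam m T f p q v b x)
    (hf : IsSwitchingProblem W G D lam m T f) (hp : IsSlowIn W lam (2 * D) T p)
    (hq : IsSlowIn W lam (2 * D) T q) (t : ℕ) (ht : 1 ≤ t) (htT : t ≤ T) : |b t| ≤ 1 / m := by
  have hG := hf.G_pos
  have hD := hf.D_pos
  have hm := zero_lt_one.trans_le hf.one_le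
  have hp := hf.switchingLoss_mem_Icc hp ht htT
  have hq := hf.switchingLoss_mem_Icc hq ht htT
  have hscale : 0 < (1 + 2) * G * D := by positivity
  rw [hv.bit t ht htT, abs_div, abs_of_pos hm, abs_div, abs_of_pos hscale]
  gcongr
  exact (div_le_one hscale).2 (abs_sub_le_of_nonneg_of_le hp.1 hp.2 hq.1 hq.2)

lemma IsCombination.switchingLoss_sub (hv : IsCombination g n U G D lam m T f p q v b x)
    (hf : IsSwitchingProblem W G D lam m T f) (ht : 1 ≤ t) (htT : t ≤ T) :
    switchingLoss f (lam * G) p t - switchingLoss f (lam * G) q t = 3 * (G * D * m) * b t := by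
  have := hf.G_pos.ne'
  have := hf.D_pos.ne'
  have := (zero_lt_one.trans_le hf.one_le).ne'
  rw [hv.bit t ht htT]
  field_simp
  ring

lemma IsCombination.norm_sub_le (hv : IsCombination g n U G D lam m T f p q v b x)
    (hf : IsSwitchingProblem W G D lam m T f) (hg : IsConfidence g n Z U)
    (hp : IsSlowIn W lam C T p) (hq : IsSlowIn W lam C T q) (ht : 1 ≤ t) (htT : t ≤ T) :
    ‖v t - v (t + 1)‖ ≤ (1 - g (x t)) * ‖p t - p (t + 1)‖ + g (x t) * ‖q t - q (t + 1)‖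
      + |g (x (t + 1)) - g (x t)| * D := by
  rw [hv.eq t ht (by omega), hv.eq (t + 1) (by omega) (by omega)]
  exact norm_convexComb_sub_convexComb_le _ _ _ _ (hg.nonneg _) (hg.le_one _)
    (hf.norm_sub_le _ (hp.mem _ (by omega) (by omega)) _ (hq.mem _ (by omega) (by omega)))

lemma IsCombination.isSlowIn (hv : IsCombination g n U G D lam m T f p q v b x)
    (hf : IsSwitchingProblem W G D lam m T f) (hg : IsConfidence g n Z U)
    (hs : IsDNPScale m n Z U) (hp : IsSlowIn W lam C T p) (hq : IsSlowIn W lam C T q)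
    (hC : C ≤ 2 * D) : IsSlowIn W lam (C + 2 * m * (Z / 6 + U / (8 * n)) * D) T v := by
  refine ⟨fun t ht htT => ?_, fun t ht htT => ?_⟩
  · rw [hv.eq t ht htT]
    exact hf.convex (hp.mem t ht htT) (hq.mem t ht htT) (sub_nonneg.2 (hg.le_one _)) (hg.nonneg _)
      (sub_add_cancel _ _)
  have hg0 := hg.nonneg (x t)
  have hg1 := sub_nonneg.2 (hg.le_one (x t))
  have hD := hf.D_pos
  have hlam := hf.lam_nonneg
  have hm := hs.m_pos
  have hweight := hv.dnp.abs_weight_sub_le hg hs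
    (hv.abs_bit_le hf (hp.mono hC) (hq.mono hC)) ht htT
  calc lam * ‖v t - v (t + 1)‖
      ≤ lam * ((1 - g (x t)) * ‖p t - p (t + 1)‖ + g (x t) * ‖q t - q (t + 1)‖
          + |g (x (t + 1)) - g (x t)| * D) := by gcongr; exact hv.norm_sub_le hf hg hp hq ht htT
    _ = (1 - g (x t)) * (lam * ‖p t - p (t + 1)‖) + g (x t) * (lam * ‖q t - q (t + 1)‖)
          + lam * |g (x (t + 1)) - g (x t)| * D := by ring
    _ ≤ (1 - g (x t)) * C + g (x t) * C + m ^ 2 * (2 / m * (Z / 6 + U / (8 * n))) * D := by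
        gcongr
        · exact hp.step_le t ht htT
        · exact hq.step_le t ht htT
        · exact hf.lam_le_sq
    _ = C + 2 * m * (Z / 6 + U / (8 * n)) * D := by field_simp; ring

lemma IsCombination.switchingLoss_le (hv : IsCombination g n U G D lam m T f p q v b x)
    (hf : IsSwitchingProblem W G D lam m T f) (hg : IsConfidence g n Z U)
    (hp : IsSlowIn W lam C T p) (hq : IsSlowIn W lam C T q) (ht : 1 ≤ t) (htT : t ≤ T) :
    switchingLoss f (lam * G) v t ≤ switchingLoss f (lam * G) p t
      - 3 * (G * D * m) * (g (x t) * b t - m / 3 * |g (x (t + 1)) - g (x t)|) := by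
  have hG := hf.G_pos
  have hD := hf.D_pos
  have hlam := hf.lam_nonneg
  have hloss : f t (v t) ≤ (1 - g (x t)) * f t (p t) + g (x t) * f t (q t) := by
    rw [hv.eq t ht (by omega)]
    exact (hf.convexOn t ht htT).2 (hp.mem t ht (by omega)) (hq.mem t ht (by omega))
      (sub_nonneg.2 (hg.le_one _)) (hg.nonneg _) (sub_add_cancel _ _)
  calc switchingLoss f (lam * G) v t
      ≤ (1 - g (x t)) * f t (p t) + g (x t) * f t (q t)
        + lam * G * ((1 - g (x t)) * ‖p t - p (t + 1)‖ + g (x t) * ‖q t - q (t + 1)‖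
          + |g (x (t + 1)) - g (x t)| * D) := by
        unfold switchingLoss
        gcongr
        exact hv.norm_sub_le hf hg hp hq ht htT
    _ = switchingLoss f (lam * G) p t
        - g (x t) * (switchingLoss f (lam * G) p t - switchingLoss f (lam * G) q t)
        + lam * (G * D * |g (x (t + 1)) - g (x t)|) := by
        unfold switchingLoss
        ring
    _ ≤ switchingLoss f (lam * G) p t - g (x t) * (3 * (G * D * m) * b t)
        + m ^ 2 * (G * D * |g (x (t + 1)) - g (x t)|) := by
        rw [hv.switchingLoss_sub hf ht htT]
        gcongr
        exact hf.lam_le_sq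
    _ = _ := by ring

lemma IsCombination.sum_switchingLoss_sub_left_le
    (hv : IsCombination g n U G D lam m T f p q v b x) (hf : IsSwitchingProblem W G D lam m T f)
    (hg : IsConfidence g n Z U) (hs : IsDNPScale m n Z U) (hp : IsSlowIn W lam (2 * D) T p)
    (hq : IsSlowIn W lam (2 * D) T q) (hr : 1 ≤ r) (hrs : r ≤ s) (hsT : s ≤ T) :
    ∑ t ∈ Icc r s, (switchingLoss f (lam * G) v t - switchingLoss f (lam * G) p t)
      ≤ 3 * (G * D * m) * (U + 1 + ((s : ℝ) - r + 1) * Z) := by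
  have hG := hf.G_pos
  have hD := hf.D_pos
  have hm := hs.m_pos
  calc _ ≤ ∑ t ∈ Icc r s,
        3 * (G * D * m) * -(g (x t) * b t - m / 3 * |g (x (t + 1)) - g (x t)|) := by
        refine sum_le_sum fun t ht => ?_
        rw [Finset.mem_Icc] at ht
        linarith [hv.switchingLoss_le hf hg hp hq (by omega : 1 ≤ t) (by omega)]
    _ ≤ _ := by
        rw [← mul_sum, sum_neg_distrib]
        gcongr
        exact neg_le.1 (hv.dnp.neg_le_sum_mul_sub hg hs (hv.abs_bit_le hf hp hq) hr hrs hsT)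

lemma IsCombination.sum_switchingLoss_sub_right_le
    (hv : IsCombination g n U G D lam m T f p q v b x) (hf : IsSwitchingProblem W G D lam m T f)
    (hg : IsConfidence g n Z U) (hs : IsDNPScale m n Z U) (hp : IsSlowIn W lam (2 * D) T p)
    (hq : IsSlowIn W lam (2 * D) T q) (hr : 1 ≤ r) (hrs : r ≤ s) (hsT : s ≤ T) :
    ∑ t ∈ Icc r s, (switchingLoss f (lam * G) v t - switchingLoss f (lam * G) q t)
      ≤ 3 * (G * D * m) * (U + 1 + ((s : ℝ) - r + 1) * (Z + (U + 1) / n)) := by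
  have hG := hf.G_pos
  have hD := hf.D_pos
  have hm := hs.m_pos
  calc _ ≤ ∑ t ∈ Icc r s,
        3 * (G * D * m) * -(g (x t) * b t - m / 3 * |g (x (t + 1)) - g (x t)| - b t) := by
        refine sum_le_sum fun t ht => ?_
        rw [Finset.mem_Icc] at ht
        linarith [hv.switchingLoss_le hf hg hp hq (by omega : 1 ≤ t) (by omega),
          hv.switchingLoss_sub hf (by omega : 1 ≤ t) (by omega)]
    _ ≤ _ := by
        rw [← mul_sum, sum_neg_distrib]
        gcongr
        exact neg_le.1 (hv.dnp.neg_le_sum_mul_sub_sub hg hs (hv.abs_bit_le hf hp hq) hr hrs hsT)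

end Combination

section Window

variable {T K : ℕ} {A : ℝ}

lemma nfun_one (T : ℕ) : nfun T 1 = T := by simp [nfun]

lemma nfun_eq_two_mul (T i : ℕ) : nfun T i = 2 * nfun T (i + 1) := by
  unfold nfun
  rw [show (1 : ℤ) - i = 1 + (1 - (i + 1 : ℕ)) by push_cast; ring, zpow_one_add₀ two_ne_zero]
  ring

lemma nfun_antitone (T : ℕ) : Antitone (nfun T) := fun i j hij =>
  mul_le_mul_of_nonneg_left (zpow_le_zpow_right₀ one_le_two (by omega)) T.cast_nonneg

lemma le_nfun_of_eq_floor (hT : 0 < T) (hA : 0 < A)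
    (hK : (K : ℤ) = ⌊Real.logb 2 ((T : ℝ) / A)⌋ + 1) : A ≤ nfun T K := by
  have hfloor : (((K : ℤ) - 1 : ℤ) : ℝ) ≤ Real.logb 2 ((T : ℝ) / A) := by
    rw [hK, add_sub_cancel_right]
    exact Int.floor_le _
  rw [Real.le_logb_iff_rpow_le one_lt_two (by positivity), Real.rpow_intCast,
    le_div_iff₀ hA] at hfloor
  rw [nfun, show (1 : ℤ) - K = -((K : ℤ) - 1) by ring, zpow_neg, ← div_eq_mul_inv,
    le_div_iff₀ (by positivity)]
  linarith

/-- The order `√(n^(i) * log (1 / Z))` of the threshold of the `i`-th DNP-cu instance, in which the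
regret of the `i`-th layer is measured. -/
noncomputable def layerScale (T : ℕ) (Z : ℝ) (i : ℕ) : ℝ := √(nfun T i * Real.log (1 / Z))

lemma layerScale_nonneg (T : ℕ) (Z : ℝ) (i : ℕ) : 0 ≤ layerScale T Z i := Real.sqrt_nonneg _

lemma layerScale_eq_sqrt_two_mul (T : ℕ) (Z : ℝ) (i : ℕ) :
    layerScale T Z i = √2 * layerScale T Z (i + 1) := by
  unfold layerScale
  rw [nfun_eq_two_mul, mul_assoc, Real.sqrt_mul zero_le_two]

end Window

section ProjectedGradient

variable {H : Type*} [NormedAddCommGroup H] [InnerProductSpace ℝ H] [CompleteSpace H] {W : Set H}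
  {G D lam η n : ℝ} {T i : ℕ} {f : ℕ → H → ℝ} {w : ℕ → H}

/-- Projected online gradient descent with constant step size `η`; the projection onto `W` is
encoded as a nearest point of `W`. -/
structure IsProjectedGradient (W : Set H) (η : ℝ) (T : ℕ) (f : ℕ → H → ℝ) (w : ℕ → H) : Prop where
  one_mem : w 1 ∈ W
  succ : ∀ t, 1 ≤ t → t ≤ T → w (t + 1) ∈ W ∧ ∀ y ∈ W,
    ‖w t - η • gradient (f t) (w t) - w (t + 1)‖ ≤ ‖w t - η • gradient (f t) (w t) - y‖

lemma norm_sub_le_two_mul_norm_of_norm_sub_le {E : Type*} [SeminormedAddCommGroup E] {p q u : E}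
    (h : ‖p - u - q‖ ≤ ‖p - u - p‖) : ‖p - q‖ ≤ 2 * ‖u‖ := by
  rw [sub_sub_cancel_left, norm_neg] at h
  calc ‖p - q‖ = ‖(p - u - q) + u‖ := by congr 1; abel
    _ ≤ ‖u‖ + ‖u‖ := (norm_add_le _ _).trans (by gcongr)
    _ = 2 * ‖u‖ := (two_mul _).symm

lemma IsProjectedGradient.isSlowIn (hw : IsProjectedGradient W η T f w) (hlam : 0 ≤ lam)
    (hη : 0 ≤ η) (hgrad : ∀ t, 1 ≤ t → t ≤ T → ∀ p ∈ W, ‖gradient (f t) p‖ ≤ G) :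
    IsSlowIn W lam (lam * (2 * (η * G))) T w := by
  have hmem (t : ℕ) (ht : 1 ≤ t) (htT : t ≤ T + 1) : w t ∈ W := by
    obtain rfl | ht1 := ht.eq_or_lt
    · exact hw.one_mem
    · obtain ⟨t, rfl⟩ : ∃ u, t = u + 1 := ⟨t - 1, by omega⟩
      exact (hw.succ t (by omega) (by omega)).1
  refine ⟨hmem, fun t ht htT => ?_⟩
  have hwt := hmem t ht (by omega)
  calc lam * ‖w t - w (t + 1)‖ ≤ lam * (2 * ‖η • gradient (f t) (w t)‖) := by
        gcongr
        exact norm_sub_le_two_mul_norm_of_norm_sub_le ((hw.succ t ht htT).2 _ hwt)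
    _ ≤ lam * (2 * (η * G)) := by
        rw [norm_smul, Real.norm_of_nonneg hη]
        gcongr
        exact hgrad t ht htT _ hwt

lemma mul_sqrt_one_div_le (hlam : 0 ≤ lam) (hn : 0 < n) (hle : 32 * lam ≤ n) :
    lam * √(1 / ((1 + 2 * lam) * n)) ≤ 1 / 8 := by
  refine le_of_sq_le_sq ?_ (by norm_num)
  rw [mul_pow, Real.sq_sqrt (by positivity), mul_one_div, div_le_iff₀ (by positivity)]
  nlinarith

lemma lam_mul_etafun_le (hG : 0 < G) (hD : 0 ≤ D) (hlam : 0 ≤ lam) (hn : 0 < nfun T i)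
    (hle : 32 * lam ≤ nfun T i) : lam * (2 * (etafun T D G lam i * G)) ≤ D / 4 := by
  calc lam * (2 * (etafun T D G lam i * G))
      = 2 * D * (lam * √(1 / ((1 + 2 * lam) * nfun T i))) := by
        unfold etafun
        field_simp
    _ ≤ 2 * D * (1 / 8) := by
        gcongr
        exact mul_sqrt_one_div_le hlam hn hle
    _ = D / 4 := by ring

lemma IsProjectedGradient.isSlowIn_of_etafun
    (hw : IsProjectedGradient W (etafun T D G lam i) T f w) (hG : 0 < G) (hD : 0 ≤ D)
    (hlam : 0 ≤ lam) (hn : 0 < nfun T i) (hle : 32 * lam ≤ nfun T i)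
    (hgrad : ∀ t, 1 ≤ t → t ≤ T → ∀ p ∈ W, ‖gradient (f t) p‖ ≤ G) :
    IsSlowIn W lam (D / 4) T w := by
  have hη : 0 ≤ etafun T D G lam i := by unfold etafun; positivity
  exact (hw.isSlowIn hlam hη hgrad).mono (lam_mul_etafun_le hG hD hlam hn hle)

end ProjectedGradient

section Cascade

variable {E : Type*} [NormedAddCommGroup E] [NormedSpace ℝ E]

/-- The cascade of smoothed OGD over arbitrary slow experts `w 1, …, w K`: the strategy `v 1` is
`w 1`, and `v (i + 1)` combines `v i` and `w (i + 1)` by means of the DNP-cu instance with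
parameters `(n^(i + 1), Z)`, threshold `U (i + 1)`, bits `b (i + 1)` and deviations `x (i + 1)`. -/
structure IsCascade (W : Set E) (G D lam m Z : ℝ) (T K : ℕ) (f : ℕ → E → ℝ) (U : ℕ → ℝ)
    (w v : ℕ → ℕ → E) (b x : ℕ → ℕ → ℝ) : Prop where
  problem : IsSwitchingProblem W G D lam m T f
  Z_pos : 0 < Z
  T_mul_Z_le : T * Z ≤ 1
  one_le_log : 1 ≤ Real.log (1 / Z)
  le_nfun : 32 * m ^ 2 * Real.log (1 / Z) ≤ nfun T K
  threshold : ∀ i, 1 ≤ i → i ≤ K → 0 < U i ∧ gtilde (nfun T i) Z (U i) = 1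
  expert : ∀ i, 1 ≤ i → i ≤ K → IsSlowIn W lam (D / 4) T (w i)
  base : v 1 = w 1
  layer : ∀ i, 1 ≤ i → i + 1 ≤ K → IsCombination (gconf (nfun T (i + 1)) Z) (nfun T (i + 1))
    (U (i + 1)) G D lam m T f (v i) (w (i + 1)) (v (i + 1)) (b (i + 1)) (x (i + 1))

namespace IsCascade

variable {W : Set E} {G D lam m Z c : ℝ} {T K i k r s : ℕ} {f : ℕ → E → ℝ} {U : ℕ → ℝ}
  {w v : ℕ → ℕ → E} {b x : ℕ → ℕ → ℝ}

lemma log_mul_le (h : IsCascade W G D lam m Z T K f U w v b x) (hiK : i ≤ K) :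
    32 * m ^ 2 * Real.log (1 / Z) ≤ nfun T i :=
  h.le_nfun.trans (nfun_antitone T hiK)

lemma sq_le (h : IsCascade W G D lam m Z T K f U w v b x) (hiK : i ≤ K) :
    32 * m ^ 2 ≤ nfun T i :=
  (le_mul_of_one_le_right (by positivity) h.one_le_log).trans (h.log_mul_le hiK)

lemma thirty_two_le (h : IsCascade W G D lam m Z T K f U w v b x) (hiK : i ≤ K) :
    32 ≤ nfun T i := by
  nlinarith [h.sq_le hiK, h.problem.one_le]

lemma one_le_layerScale (h : IsCascade W G D lam m Z T K f U w v b x) (hiK : i ≤ K) :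
    1 ≤ layerScale T Z i :=
  Real.one_le_sqrt.2 (one_le_mul_of_one_le_of_one_le (by linarith [h.thirty_two_le hiK])
    h.one_le_log)

lemma m_mul_layerScale_le (h : IsCascade W G D lam m Z T K f U w v b x) (hiK : i ≤ K) :
    m * layerScale T Z i ≤ nfun T i / 5 := by
  have hn := h.thirty_two_le hiK
  have hL := h.one_le_log
  refine le_of_sq_le_sq ?_ (by positivity)
  calc (m * layerScale T Z i) ^ 2 = m ^ 2 * Real.log (1 / Z) * nfun T i := by
        rw [layerScale, mul_pow, Real.sq_sqrt (by positivity)]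
        ring
    _ ≤ nfun T i / 25 * nfun T i := by
        gcongr
        linarith [h.log_mul_le hiK]
    _ = _ := by ring

lemma threshold_le (h : IsCascade W G D lam m Z T K f U w v b x) (hi : 1 ≤ i) (hiK : i ≤ K) :
    U i ≤ 4 * layerScale T Z i :=
  le_of_gtilde_eq_one (h.thirty_two_le hiK) h.Z_pos h.one_le_log (h.threshold i hi hiK).1.le
    (h.threshold i hi hiK).2

lemma isDNPScale (h : IsCascade W G D lam m Z T K f U w v b x) (hi : 1 ≤ i) (hiK : i ≤ K) :
    IsDNPScale m (nfun T i) Z (U i) where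
  one_le := h.problem.one_le
  sq_le := h.sq_le hiK
  Z_pos := h.Z_pos
  U_pos := (h.threshold i hi hiK).1
  mul_le := by nlinarith [h.m_mul_layerScale_le hiK, h.threshold_le hi hiK, h.problem.one_le]

lemma isConfidence (h : IsCascade W G D lam m Z T K f U w v b x) (hi : 1 ≤ i) (hiK : i ≤ K) :
    IsConfidence (gconf (nfun T i) Z) (nfun T i) Z (U i) :=
  isConfidence_gconf (by linarith [h.thirty_two_le hiK]) h.Z_pos (h.threshold i hi hiK).1.le
    (h.threshold i hi hiK).2

lemma Z_le (h : IsCascade W G D lam m Z T K f U w v b x) (hi : 1 ≤ i) (hiK : i ≤ K) :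
    Z ≤ layerScale T Z i / nfun T i := by
  rw [le_div_iff₀ (by linarith [h.thirty_two_le hiK])]
  calc Z * nfun T i ≤ Z * T := by
        gcongr
        · exact h.Z_pos.le
        · exact nfun_one T ▸ nfun_antitone T hi
    _ ≤ 1 := by linarith [h.T_mul_Z_le]
    _ ≤ layerScale T Z i := h.one_le_layerScale hiK

lemma rate_nonneg (h : IsCascade W G D lam m Z T K f U w v b x) (hiK : i ≤ K) :
    0 ≤ m * layerScale T Z i / nfun T i := by
  have := h.problem.one_le
  have := h.thirty_two_le hiK
  have := layerScale_nonneg T Z i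
  positivity

lemma two_mul_m_mul_le (h : IsCascade W G D lam m Z T K f U w v b x) (hi : 1 ≤ i) (hiK : i ≤ K) :
    2 * m * (Z / 6 + U i / (8 * nfun T i)) ≤ 4 / 3 * (m * layerScale T Z i / nfun T i) := by
  have hm := (h.isDNPScale hi hiK).m_pos
  have hn := (h.isDNPScale hi hiK).n_pos
  calc 2 * m * (Z / 6 + U i / (8 * nfun T i))
      ≤ 2 * m * (layerScale T Z i / nfun T i / 6 + 4 * layerScale T Z i / (8 * nfun T i)) := by
        gcongr
        · exact h.Z_le hi hiK
        · exact h.threshold_le hi hiK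
    _ = _ := by field_simp; ring

lemma m_mul_layerScale_div_le (h : IsCascade W G D lam m Z T K f U w v b x) (hiK : i + 1 ≤ K) :
    m * layerScale T Z i / nfun T i
      ≤ 3 / 4 * (m * layerScale T Z (i + 1) / nfun T (i + 1)) := by
  have hm := zero_lt_one.trans_le h.problem.one_le
  have hn := h.thirty_two_le hiK
  have hS := layerScale_nonneg T Z (i + 1)
  rw [layerScale_eq_sqrt_two_mul, nfun_eq_two_mul]
  calc m * (√2 * layerScale T Z (i + 1)) / (2 * nfun T (i + 1))
      ≤ m * (3 / 2 * layerScale T Z (i + 1)) / (2 * nfun T (i + 1)) := by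
        gcongr
        exact Real.sqrt_two_lt_three_halves.le
    _ = _ := by field_simp; ring

lemma speed_le (h : IsCascade W G D lam m Z T K f U w v b x) (hiK : i ≤ K) :
    D * (1 / 4 + 6 * (m * layerScale T Z i / nfun T i)) ≤ 2 * D := by
  have hrate : m * layerScale T Z i / nfun T i ≤ 1 / 5 := by
    rw [div_le_iff₀ (by linarith [h.thirty_two_le hiK])]
    linarith [h.m_mul_layerScale_le hiK]
  nlinarith [h.problem.D_pos]

lemma expert_isSlowIn (h : IsCascade W G D lam m Z T K f U w v b x) (hi : 1 ≤ i) (hiK : i ≤ K)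
    {j : ℕ} (hjK : j ≤ K) :
    IsSlowIn W lam (D * (1 / 4 + 6 * (m * layerScale T Z j / nfun T j))) T (w i) := by
  refine (h.expert i hi hiK).mono ?_
  rw [div_eq_mul_one_div]
  exact mul_le_mul_of_nonneg_left (by linarith [h.rate_nonneg hjK]) h.problem.D_pos.le

lemma isSlowIn (h : IsCascade W G D lam m Z T K f U w v b x) (hi : 1 ≤ i) (hiK : i ≤ K) :
    IsSlowIn W lam (D * (1 / 4 + 6 * (m * layerScale T Z i / nfun T i))) T (v i) := by
  induction i, hi using Nat.le_induction with
  | base => exact h.base ▸ h.expert_isSlowIn le_rfl hiK hiK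
  | succ i hi ih =>
    refine ((h.layer i hi hiK).isSlowIn h.problem (h.isConfidence (by omega) hiK)
      (h.isDNPScale (by omega) hiK) (ih (by omega))
      (h.expert_isSlowIn (by omega) hiK (by omega)) (h.speed_le (by omega))).mono ?_
    have hrate := h.m_mul_layerScale_div_le hiK
    have hweight := h.two_mul_m_mul_le (by omega : 1 ≤ i + 1) hiK
    have hnonneg := h.rate_nonneg hiK
    rw [mul_comm _ D, ← mul_add]
    exact mul_le_mul_of_nonneg_left (by linarith) h.problem.D_pos.le

lemma mul_Z_le (h : IsCascade W G D lam m Z T K f U w v b x) (hr : 1 ≤ r) (hsT : s ≤ T) :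
    ((s : ℝ) - r + 1) * Z ≤ 1 := by
  have hr : (1 : ℝ) ≤ r := mod_cast hr
  have hsT : (s : ℝ) ≤ T := mod_cast hsT
  nlinarith [h.Z_pos, h.T_mul_Z_le]

lemma sum_switchingLoss_succ_sub_le (h : IsCascade W G D lam m Z T K f U w v b x) (hi : 1 ≤ i)
    (hiK : i + 1 ≤ K) (hr : 1 ≤ r) (hrs : r ≤ s) (hsT : s ≤ T) :
    ∑ t ∈ Icc r s, (switchingLoss f (lam * G) (v (i + 1)) t - switchingLoss f (lam * G) (v i) t)
      ≤ G * D * m * (12 * layerScale T Z (i + 1) + 6) := by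
  have hG := h.problem.G_pos
  have hD := h.problem.D_pos
  have hm := h.problem.one_le
  calc _ ≤ 3 * (G * D * m) * (U (i + 1) + 1 + ((s : ℝ) - r + 1) * Z) :=
        (h.layer i hi hiK).sum_switchingLoss_sub_left_le h.problem (h.isConfidence (by omega) hiK)
          (h.isDNPScale (by omega) hiK) ((h.isSlowIn hi (by omega)).mono (h.speed_le (by omega)))
          ((h.expert_isSlowIn (by omega) hiK hiK).mono (h.speed_le hiK)) hr hrs hsT
    _ ≤ 3 * (G * D * m) * (4 * layerScale T Z (i + 1) + 1 + 1) := by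
        gcongr
        · exact h.threshold_le (by omega) hiK
        · exact h.mul_Z_le hr hsT
    _ = _ := by ring

lemma sum_switchingLoss_sub_le (h : IsCascade W G D lam m Z T K f U w v b x) (hk : 1 ≤ k)
    (hki : k ≤ i) (hiK : i ≤ K) (hr : 1 ≤ r) (hrs : r ≤ s) (hsT : s ≤ T) :
    ∑ t ∈ Icc r s, (switchingLoss f (lam * G) (v i) t - switchingLoss f (lam * G) (v k) t)
      ≤ G * D * m * (30 * (layerScale T Z k - layerScale T Z i) + 6 * ((i : ℝ) - k)) := by
  induction i, hki using Nat.le_induction with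
  | base => simp
  | succ i hki ih =>
    have hG := h.problem.G_pos
    have hD := h.problem.D_pos
    have hm := h.problem.one_le
    have hscale : 7 / 5 * layerScale T Z (i + 1) ≤ layerScale T Z i := by
      rw [layerScale_eq_sqrt_two_mul T Z i]
      gcongr
      exacts [layerScale_nonneg T Z _, Real.le_sqrt_of_sq_le (by norm_num)]
    calc ∑ t ∈ Icc r s,
          (switchingLoss f (lam * G) (v (i + 1)) t - switchingLoss f (lam * G) (v k) t)
        = ∑ t ∈ Icc r s,
            (switchingLoss f (lam * G) (v (i + 1)) t - switchingLoss f (lam * G) (v i) t)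
          + ∑ t ∈ Icc r s,
            (switchingLoss f (lam * G) (v i) t - switchingLoss f (lam * G) (v k) t) := by
          rw [← sum_add_distrib]
          exact sum_congr rfl fun t _ => (sub_add_sub_cancel _ _ _).symm
      _ ≤ G * D * m * (12 * layerScale T Z (i + 1) + 6)
          + G * D * m * (30 * (layerScale T Z k - layerScale T Z i) + 6 * ((i : ℝ) - k)) :=
          add_le_add (h.sum_switchingLoss_succ_sub_le (hk.trans hki) hiK hr hrs hsT)
            (ih (by omega))
      _ = G * D * m * (12 * layerScale T Z (i + 1) + 6
          + (30 * (layerScale T Z k - layerScale T Z i) + 6 * ((i : ℝ) - k))) := by ring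
      _ ≤ _ := by
          refine mul_le_mul_of_nonneg_left ?_ (by positivity)
          push_cast
          linarith

lemma sum_switchingLoss_sub_expert_le (h : IsCascade W G D lam m Z T K f U w v b x) (hk : 1 ≤ k)
    (hkK : k ≤ K) (hr : 1 ≤ r) (hrs : r ≤ s) (hsT : s ≤ T)
    (hτ : (s : ℝ) - r + 1 ≤ c * nfun T k) :
    ∑ t ∈ Icc r s, (switchingLoss f (lam * G) (v k) t - switchingLoss f (lam * G) (w k) t)
      ≤ G * D * m * ((12 + 12 * c) * layerScale T Z k + 6 + 3 * c) := by
  have hG := h.problem.G_pos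
  have hD := h.problem.D_pos
  have hm := h.problem.one_le
  have hS := layerScale_nonneg T Z k
  have hn := (h.isDNPScale hk hkK).n_pos
  have hrs' : (r : ℝ) ≤ s := mod_cast hrs
  have hc : 0 < c := pos_of_mul_pos_left (by linarith) hn.le
  obtain rfl | hk1 := hk.eq_or_lt
  · simp only [h.base, sub_self, sum_const_zero]
    positivity
  obtain ⟨i, rfl⟩ : ∃ i, k = i + 1 := ⟨k - 1, by omega⟩
  have hU := (h.threshold (i + 1) hk hkK).1
  calc _ ≤ 3 * (G * D * m) * (U (i + 1) + 1
          + ((s : ℝ) - r + 1) * (Z + (U (i + 1) + 1) / nfun T (i + 1))) :=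
        (h.layer i (by omega) hkK).sum_switchingLoss_sub_right_le h.problem
          (h.isConfidence hk hkK) (h.isDNPScale hk hkK)
          ((h.isSlowIn (by omega) (by omega)).mono (h.speed_le (by omega)))
          ((h.expert_isSlowIn hk hkK hkK).mono (h.speed_le hkK)) hr hrs hsT
    _ = 3 * (G * D * m) * (U (i + 1) + 1 + (((s : ℝ) - r + 1) * Z
          + ((s : ℝ) - r + 1) * ((U (i + 1) + 1) / nfun T (i + 1)))) := by rw [mul_add _ Z]
    _ ≤ 3 * (G * D * m) * (U (i + 1) + 1
          + (1 + c * nfun T (i + 1) * ((U (i + 1) + 1) / nfun T (i + 1)))) := by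
        gcongr
        exact h.mul_Z_le hr hsT
    _ = 3 * (G * D * m) * (U (i + 1) + 1 + (1 + c * (U (i + 1) + 1))) := by
        rw [mul_assoc c, mul_div_cancel₀ _ hn.ne']
    _ ≤ 3 * (G * D * m) * (4 * layerScale T Z (i + 1) + 1
          + (1 + c * (4 * layerScale T Z (i + 1) + 1))) := by
        have := h.threshold_le hk hkK
        gcongr
    _ = _ := by ring

end IsCascade

theorem smoothed_ogd_regret_BK_vs_Ak_general {W : Set E} {G D lam m Z c : ℝ} {T K k r s : ℕ}
    {f : ℕ → E → ℝ} {U : ℕ → ℝ} {w v : ℕ → ℕ → E} {b x : ℕ → ℕ → ℝ}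
    (h : IsCascade W G D lam m Z T K f U w v b x) (hk : 1 ≤ k) (hkK : k ≤ K) (hr : 1 ≤ r)
    (hrs : r ≤ s) (hsT : s ≤ T) (hτ : (s : ℝ) - r + 1 ≤ c * nfun T k) :
    ∑ t ∈ Icc r s, switchingLoss f (lam * G) (v K) t
        - ∑ t ∈ Icc r s, switchingLoss f (lam * G) (w k) t
      ≤ G * D * m * ((12 * c + 42) * √(nfun T k * Real.log (1 / Z))
        + 6 + 3 * c + 6 * ((K : ℝ) - k)) := by
  have hG := h.problem.G_pos
  have hD := h.problem.D_pos
  have hm := h.problem.one_le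
  calc _ = ∑ t ∈ Icc r s, (switchingLoss f (lam * G) (v K) t - switchingLoss f (lam * G) (v k) t)
        + ∑ t ∈ Icc r s,
          (switchingLoss f (lam * G) (v k) t - switchingLoss f (lam * G) (w k) t) := by
        rw [sum_sub_distrib, sum_sub_distrib, sub_add_sub_cancel]
    _ ≤ G * D * m * (30 * (layerScale T Z k - layerScale T Z K) + 6 * ((K : ℝ) - k))
        + G * D * m * ((12 + 12 * c) * layerScale T Z k + 6 + 3 * c) :=
        add_le_add (h.sum_switchingLoss_sub_le hk hkK le_rfl hr hrs hsT)
          (h.sum_switchingLoss_sub_expert_le hk hkK hr hrs hsT hτ)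
    _ = G * D * m * ((12 * c + 42) * layerScale T Z k + 6 + 3 * c + 6 * ((K : ℝ) - k))
        - 30 * (G * D * m * layerScale T Z K) := by ring
    _ ≤ _ := sub_le_self _ (by have := layerScale_nonneg T Z K; positivity)

end Cascade

lemma max_sqrt_one_sq {a : ℝ} (ha : 0 ≤ a) : max √a 1 ^ 2 = max a 1 := by
  rw [pow_left_monotoneOn.map_max (Real.sqrt_nonneg a) (Set.mem_Ici.2 zero_le_one),
    Real.sq_sqrt ha, one_pow]

/-- **Lemma 3: regret of the final combiner w.r.t. the k-th expert.** -/
theorem smoothed_ogd_regret_BK_vs_Ak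
    (d : ℕ) (W : Set (EuclideanSpace ℝ (Fin d)))
    (hWne : W.Nonempty) (hWconv : Convex ℝ W) (hWclosed : IsClosed W)
    (G D : ℝ) (hG : 0 < G) (hD : 0 < D)
    (hdiam : ∀ p ∈ W, ∀ q ∈ W, ‖p - q‖ ≤ D)
    (T : ℕ) (f : ℕ → EuclideanSpace ℝ (Fin d) → ℝ)
    (hconv : ∀ t, 1 ≤ t → t ≤ T → ConvexOn ℝ Set.univ (f t))
    (hdiff : ∀ t, 1 ≤ t → t ≤ T → Differentiable ℝ (f t))
    (hgrad : ∀ t, 1 ≤ t → t ≤ T → ∀ p ∈ W, ‖gradient (f t) p‖ ≤ G)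
    (hrange : ∀ t, 1 ≤ t → t ≤ T → ∀ p ∈ W, f t p ∈ Set.Icc 0 (G * D))
    (lam : ℝ) (hlam : 0 ≤ lam)
    (Z : ℝ) (hZdef : Z = 1 / (T : ℝ))
    (hT : (T : ℝ) ≥ max (Real.sqrt lam * Real.logb 2 (T : ℝ)) (Real.exp 1))
    (K : ℕ)
    (hK : (K : ℤ) = ⌊Real.logb 2 ((T : ℝ) / (32 * max lam 1 * Real.log (1 / Z)))⌋ + 1)
    (Ufn : ℕ → ℝ)
    (hU : ∀ i, 1 ≤ i → i ≤ K → 0 < Ufn i ∧ gtilde (nfun T i) Z (Ufn i) = 1)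
    (hUuniq : ∀ i, 1 ≤ i → i ≤ K → ∀ y, 0 < y → gtilde (nfun T i) Z y = 1 → y = Ufn i)
    (w v : ℕ → ℕ → EuclideanSpace ℝ (Fin d))
    (hwW1 : ∀ i, 1 ≤ i → i ≤ K → w i 1 ∈ W)
    (hwrec : ∀ i, 1 ≤ i → i ≤ K → ∀ t, 1 ≤ t → t ≤ T →
      w i (t + 1) ∈ W ∧ ∀ y ∈ W,
        ‖w i t - etafun T D G lam i • gradient (f t) (w i t) - w i (t + 1)‖
          ≤ ‖w i t - etafun T D G lam i • gradient (f t) (w i t) - y‖)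
    (bb : ℕ → ℕ → ℝ)
    (hbb : ∀ i t, bb i t =
      (((f t (v (i - 1) t) + lam * G * ‖v (i - 1) t - v (i - 1) (t + 1)‖)
          - (f t (w i t) + lam * G * ‖w i t - w i (t + 1)‖)) / ((1 + 2) * G * D))
        / max (Real.sqrt lam) 1)
    (xdev : ℕ → ℕ → ℝ)
    (hxdev1 : ∀ i, 2 ≤ i → i ≤ K → xdev i 1 = 0)
    (hxdevrec : ∀ i, 2 ≤ i → i ≤ K → ∀ t, 1 ≤ t → t ≤ T →
      xdev i (t + 1) =
        if (0 ≤ xdev i t ∧ xdev i t ≤ Ufn i) ∨ (xdev i t < 0 ∧ 0 < bb i t)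
            ∨ (Ufn i < xdev i t ∧ bb i t < 0)
        then (1 - 1 / nfun T i) * xdev i t + bb i t
        else (1 - 1 / nfun T i) * xdev i t)
    (hv1 : ∀ t, v 1 t = w 1 t)
    (hv : ∀ i, 2 ≤ i → i ≤ K → ∀ t, 1 ≤ t → t ≤ T + 1 →
      v i t = (1 - gconf (nfun T i) Z (xdev i t)) • v (i - 1) t
                + gconf (nfun T i) Z (xdev i t) • w i t)
    (k : ℕ) (hk1 : 1 ≤ k) (hkK : k ≤ K)
    (c : ℝ) (hc : 0 < c)
    (r s : ℕ) (hr : 1 ≤ r) (hrs : r ≤ s) (hsT : s ≤ T)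
    (htau : (s : ℝ) - r + 1 ≤ c * nfun T k) :
    ∑ t ∈ Finset.Icc r s, (f t (v K t) + lam * G * ‖v K t - v K (t + 1)‖)
      - ∑ t ∈ Finset.Icc r s, (f t (w k t) + lam * G * ‖w k t - w k (t + 1)‖)
    ≤ G * D * max (Real.sqrt lam) 1
        * ((12 * c + 53) * Real.sqrt (nfun T k * Real.log (T : ℝ))
            + 9 + 6 * c + 6 * ((K : ℝ) - k)) := by
  set m := max √lam 1
  have hm1 : 1 ≤ m := le_max_right _ _
  have hm2 : m ^ 2 = max lam 1 := max_sqrt_one_sq hlam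
  have hTe : Real.exp 1 ≤ T := (le_max_right _ _).trans hT
  have hT0 : (0 : ℝ) < T := (Real.exp_pos 1).trans_le hTe
  have hlogT : Real.log (1 / Z) = Real.log T := by rw [hZdef, one_div_one_div]
  have hlog : 1 ≤ Real.log (1 / Z) := hlogT ▸ (Real.le_log_iff_exp_le hT0).2 hTe
  have hnK : 32 * m ^ 2 * Real.log (1 / Z) ≤ nfun T K :=
    le_nfun_of_eq_floor (mod_cast hT0) (by positivity) (hm2 ▸ hK)
  have hexpert (i : ℕ) (hi : 1 ≤ i) (hiK : i ≤ K) : IsSlowIn W lam (D / 4) T (w i) := by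
    have hn : 32 * m ^ 2 ≤ nfun T i :=
      (le_mul_of_one_le_right (by positivity) hlog).trans (hnK.trans (nfun_antitone T hiK))
    exact IsProjectedGradient.isSlowIn_of_etafun ⟨hwW1 i hi hiK, hwrec i hi hiK⟩ hG hD.le hlam
      (by nlinarith) (by linarith [le_max_left lam 1]) hgrad
  have hcascade : IsCascade W G D lam m Z T K f Ufn w v bb xdev :=
    ⟨⟨hG, hD, hlam, hm1, hm2 ▸ le_max_left _ _, hWconv, hdiam,
      fun t ht htT => (hconv t ht htT).subset W.subset_univ hWconv, hrange⟩,
      hZdef ▸ one_div_pos.2 hT0, by rw [hZdef, mul_one_div_cancel hT0.ne'], hlog, hnK, hU, hexpert,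
      funext hv1, fun i hi hiK => ⟨fun t _ _ => hbb (i + 1) t,
        ⟨hxdev1 _ (by omega) hiK, hxdevrec _ (by omega) hiK⟩, hv _ (by omega) hiK⟩⟩
  refine (smoothed_ogd_regret_BK_vs_Ak_general hcascade hk1 hkK hr hrs hsT htau).trans ?_
  rw [hlogT]
  gcongr <;> linarith
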